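/- Let Δ be a real matrix with spectral norm ‖Δ‖ < 1. Then the spectral norm of Δ(I + ΔᵀΔ)⁻¹ equals ‖Δ‖/(1 + ‖Δ‖²). -/

import Mathlib

open Matrix

/-- The spectral (operator 2-)norm of a real matrix. -/
noncomputable def specNorm {m n : ℕ} (A : Matrix (Fin m) (Fin n) ℝ) : ℝ :=
  ‖LinearMap.toContinuousLinearMap (Matrix.toEuclideanLin A)‖


set_option maxHeartbeats 1000000 in
/-- If ‖Δ‖ < 1 then ‖Δ(I + ΔᵀΔ)⁻¹‖ = ‖Δ‖/(1 + ‖Δ‖²). -/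
theorem specNorm_mul_inv_one_add_eq {p q : ℕ} (Δ : Matrix (Fin p) (Fin q) ℝ)
    (h : specNorm Δ < 1) :
    specNorm (Δ * (1 + Δᵀ * Δ)⁻¹) = specNorm Δ / (1 + specNorm Δ ^ 2) := by
  have hdet : IsUnit (1 + Δᵀ * Δ).det := by
    have h1 : (1 + Δᴴ * Δ).PosDef :=
      Matrix.PosDef.one.add_posSemidef (Matrix.posSemidef_conjTranspose_mul_self Δ)
    rw [Matrix.conjTranspose_eq_transpose_of_trivial] at h1
    exact (Matrix.isUnit_iff_isUnit_det _).1 h1.isUnit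
  obtain ⟨R, hR⟩ : ∃ R, R = Δ * (1 + Δᵀ * Δ)⁻¹ := ⟨_, rfl⟩
  obtain ⟨T, hT⟩ : ∃ T, T = LinearMap.toContinuousLinearMap (Matrix.toEuclideanLin Δ) := ⟨_, rfl⟩
  obtain ⟨S, hS⟩ : ∃ S, S = LinearMap.toContinuousLinearMap (Matrix.toEuclideanLin R) := ⟨_, rfl⟩
  have hs : specNorm Δ = ‖T‖ := by rw [hT]; rfl
  have hn : specNorm R = ‖S‖ := by rw [hS]; rfl
  have hRG : R * (1 + Δᵀ * Δ) = Δ := by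
    rw [hR, Matrix.mul_assoc, Matrix.nonsing_inv_mul _ hdet, Matrix.mul_one]
  have hadj : ∀ z, T.adjoint z = Matrix.toEuclideanLin Δᵀ z := by
    intro z
    rw [← Matrix.conjTranspose_eq_transpose_of_trivial,
      Matrix.toEuclideanLin_conjTranspose_eq_adjoint, hT]
    rfl
  have hG : ∀ y, Matrix.toEuclideanLin (1 + Δᵀ * Δ) y = y + T.adjoint (T y) := by
    intro y
    rw [hadj, hT]
    ext i
    simp [Matrix.toLpLin_apply, Matrix.add_mulVec, Matrix.mulVec_mulVec]
  have key : ∀ y, S (y + T.adjoint (T y)) = T y := by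
    intro y
    rw [← hG, hS, hT]
    conv_rhs => rw [← hRG]
    ext i
    simp [Matrix.toLpLin_apply, Matrix.mulVec_mulVec]
  have surj : ∀ x, ∃ y, x = y + T.adjoint (T y) := by
    intro x
    refine ⟨Matrix.toEuclideanLin (1 + Δᵀ * Δ)⁻¹ x, ?_⟩
    rw [← hG]
    ext i
    simp only [Matrix.toLpLin_apply, Matrix.mulVec_mulVec, Matrix.mul_nonsing_inv _ hdet,
      Matrix.one_mulVec]
  rw [← hR, hn, hs]
  rw [hs] at h
  have hs0 := norm_nonneg T
  have hN0 := norm_nonneg S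
  have hp : 0 < 1 + ‖T‖ ^ 2 := by positivity
  apply le_antisymm
  · refine ContinuousLinearMap.opNorm_le_bound _ (by positivity) fun x => ?_
    obtain ⟨y, rfl⟩ := surj x
    rw [key, div_mul_eq_mul_div, le_div_iff₀ hp]
    set x := y + T.adjoint (T y) with hx
    have hin : inner ℝ x y = ‖y‖ ^ 2 + ‖T y‖ ^ 2 := by
      rw [hx, inner_add_left, ContinuousLinearMap.adjoint_inner_left,
        real_inner_self_eq_norm_sq, real_inner_self_eq_norm_sq]
    have hcs := real_inner_le_norm x y
    rw [hin] at hcs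
    have hb := T.le_opNorm y
    have ha0 := norm_nonneg y
    have hb0 := norm_nonneg (T y)
    rcases ha0.eq_or_lt with ha | ha
    · have : ‖T y‖ = 0 := le_antisymm (by rw [← ha] at hb; simpa using hb) hb0
      rw [this]; simp; positivity
    · have h2 : ‖T‖ * ‖T y‖ ≤ ‖y‖ := by
        have h3 : ‖T y‖ ≤ ‖y‖ := by nlinarith
        nlinarith
      have h4 := mul_nonneg (sub_nonneg.2 hb) (sub_nonneg.2 h2)
      have h5 := mul_le_mul_of_nonneg_left hcs hs0
      refine le_of_mul_le_mul_right ?_ ha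
      nlinarith
  · rw [div_le_iff₀ hp]
    refine ContinuousLinearMap.opNorm_le_bound _ (by positivity) fun y => ?_
    rw [mul_assoc]
    calc ‖T y‖ = ‖S (y + T.adjoint (T y))‖ := by rw [key]
      _ ≤ ‖S‖ * ‖y + T.adjoint (T y)‖ := S.le_opNorm _
      _ ≤ ‖S‖ * ((1 + ‖T‖ ^ 2) * ‖y‖) := by
        gcongr
        have h1 := norm_add_le y (T.adjoint (T y))
        have h2 := (T.adjoint).le_opNorm (T y)
        have hA : ‖T.adjoint‖ = ‖T‖ := LinearIsometryEquiv.norm_map ContinuousLinearMap.adjoint T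
        rw [hA] at h2
        have h3 := mul_le_mul_of_nonneg_left (T.le_opNorm y) hs0
        nlinarith
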